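/- arXiv:0801.0711 — 3 statements merged into one kernel-verified Lean document; each statement's English description precedes it below -/
import Mathlib

section
/- For every integer k ≥ 1, ι(t·G_{2k−1}) = (−1)^{k+1}·( (4k/(2k−1))·G_{2k} + t·G_{2k−1} ) in ℚ[t,v]. -/
open MvPolynomial

/-- The variable `s` (weight 2). -/
noncomputable def s : MvPolynomial (Fin 2) ℚ := X 0
/-- The variable `t` (weight 1). -/
noncomputable def t : MvPolynomial (Fin 2) ℚ := X 1

/-- `f k` is the weighted-degree-`k` homogeneous part of `log (1+s+t)`, where `s` has
weight 2 and `t` weight 1: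
`f k = ∑_{2a+b = k, a+b ≥ 1} ((-1)^(a+b-1)/(a+b)) ⬝ C(a+b,a) ⬝ s^a t^b`. -/
noncomputable def f (k : ℕ) : MvPolynomial (Fin 2) ℚ :=
  ∑ a ∈ Finset.range (k / 2 + 1),
    C (((-1 : ℚ) ^ (k - a - 1) / (k - a : ℚ)) * ((k - a).choose a : ℚ)) *
      s ^ a * t ^ (k - 2 * a)

/-- In `ℚ[t,v]` (with `t = X 0`, `v = X 1`), `G k` is obtained from `f k` by substituting
`s = (t² + v²)/4` and keeping `t`. -/
noncomputable def G (k : ℕ) : MvPolynomial (Fin 2) ℚ :=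
  aeval ![C (1/4 : ℚ) * ((X 0) ^ 2 + (X 1) ^ 2), X 0] (f k)

/-- The `ℚ`-algebra endomorphism `ι` of `ℚ[t,v]` with `ι t = -v`, `ι v = t`. -/
noncomputable def iota : MvPolynomial (Fin 2) ℚ →ₐ[ℚ] MvPolynomial (Fin 2) ℚ :=
  aeval ![-(X 1), X 0]


/-- Lucas-type power sums. -/
noncomputable def lucP {R : Type*} [CommRing R] (x y : R) : ℕ → R
  | 0 => 2
  | 1 => y
  | (n + 2) => y * lucP x y (n + 1) - x * lucP x y n

lemma lucP_map {R S : Type*} [CommRing R] [CommRing S] (g : R →+* S) (x y : R) (n : ℕ) :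
    g (lucP x y n) = lucP (g x) (g y) n ∧ g (lucP x y (n + 1)) = lucP (g x) (g y) (n + 1) := by
  induction n with
  | zero => exact ⟨by simpa [lucP] using map_ofNat g 2, by simp [lucP]⟩
  | succ n ih =>
    refine ⟨ih.2, ?_⟩
    simp only [lucP, map_sub, map_mul, ih.1, ih.2]

lemma lucP_key {R : Type*} [CommRing R] (x y v : R) (h : v ^ 2 = 4 * x - y ^ 2) (j : ℕ) :
    lucP x (-v) (2 * j) = (-1) ^ j * lucP x y (2 * j) ∧
    -v * lucP x (-v) (2 * j + 1) =
      (-1) ^ j * (y * lucP x y (2 * j + 1) - 2 * lucP x y (2 * j + 2)) := by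
  induction j with
  | zero =>
    simp only [lucP, mul_zero, zero_add, pow_zero, one_mul, true_and]
    linear_combination h
  | succ j ih =>
    obtain ⟨h1, h2⟩ := ih
    have e1 : 2 * (j + 1) = 2 * j + 2 := by ring
    have hA : lucP x (-v) (2 * j + 2) = (-1) ^ (j + 1) * lucP x y (2 * j + 2) := by
      simp only [lucP] at *
      linear_combination h2 - x * h1
    rw [e1]
    refine ⟨hA, ?_⟩
    have r1 : lucP x (-v) (2 * j + 2 + 1) =
      -v * lucP x (-v) (2 * j + 2) - x * lucP x (-v) (2 * j + 1) := by simp only [lucP]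
    have r2 : lucP x y (2 * j + 2 + 1) =
      y * lucP x y (2 * j + 2) - x * lucP x y (2 * j + 1) := by simp only [lucP]
    have r3 : lucP x y (2 * j + 2 + 2) =
      y * lucP x y (2 * j + 2 + 1) - x * lucP x y (2 * j + 2) := by simp only [lucP]
    rw [r3, r1, r2, hA]
    linear_combination (-x) * h2 + (-1) ^ (j + 1) * lucP x y (2 * j + 2) * h

/-- Lucas coefficients. -/
noncomputable def lucC (k a : ℕ) : ℚ := (k : ℚ) / (k - a : ℚ) * ((k - a).choose a : ℚ)

lemma lucC_zero (k a : ℕ) (hk : 1 ≤ k) (h : k < 2 * a) : lucC k a = 0 := by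
  unfold lucC
  rw [Nat.choose_eq_zero_of_lt (by omega)]; simp

lemma lucC_rec (k a : ℕ) (hk : 1 ≤ k) :
    lucC (k + 2) (a + 1) = lucC (k + 1) (a + 1) + lucC k a := by
  by_cases h : a < k
  · obtain ⟨n, rfl⟩ : ∃ n, k = n + 1 + a := ⟨k - a - 1, by omega⟩
    unfold lucC
    have e1 : n + 1 + a + 2 - (a + 1) = n + 1 + 1 := by omega
    have e2 : n + 1 + a + 1 - (a + 1) = n + 1 := by omega
    have e3 : n + 1 + a - a = n + 1 := by omega
    rw [e1, e2, e3, Nat.choose_succ_succ (n + 1) a]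
    have hc : ((n + 1).choose (a + 1) : ℚ) * (a + 1) = (n + 1).choose a * (n + 1 - a) := by
      by_cases ha : a ≤ n + 1
      · have := Nat.choose_succ_right_eq (n + 1) a
        have h2 := congrArg (Nat.cast : ℕ → ℚ) this
        push_cast [Nat.cast_sub ha] at h2
        exact h2
      · rw [Nat.choose_eq_zero_of_lt (by omega), Nat.choose_eq_zero_of_lt (by omega)]; simp
    push_cast
    generalize ((n + 1).choose (a + 1) : ℚ) = Y at *
    generalize ((n + 1).choose a : ℚ) = Z at *
    have d1 : (n : ℚ) + 1 + a + 2 - (a + 1) = n + 2 := by ring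
    have d2 : (n : ℚ) + 1 + a + 1 - (a + 1) = n + 1 := by ring
    have d3 : (n : ℚ) + 1 + a - a = n + 1 := by ring
    rw [d1, d2, d3]
    have p1 : (n : ℚ) + 1 ≠ 0 := by positivity
    have p2 : (n : ℚ) + 2 ≠ 0 := by positivity
    field_simp
    linear_combination -hc
  · rw [lucC_zero _ _ (by omega) (by omega), lucC_zero _ _ (by omega) (by omega),
      lucC_zero _ _ hk (by omega)]; simp

/-- Truncated sum. -/
noncomputable def lucS (N k : ℕ) : MvPolynomial (Fin 2) ℚ :=
  ∑ a ∈ Finset.range N, C (lucC k a) * (-s) ^ a * t ^ (k - 2 * a)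

lemma lucS_eq (N k : ℕ) (hk : 1 ≤ k) (hN : k / 2 + 1 ≤ N) : lucS N k = lucS (k / 2 + 1) k := by
  unfold lucS
  symm
  apply Finset.sum_subset (Finset.range_mono hN)
  intro a _ ha
  rw [Finset.mem_range] at ha
  rw [lucC_zero k a hk (by omega)]; simp

lemma lucS_rec (k : ℕ) (hk : 1 ≤ k) :
    lucS (k + 3) (k + 2) = t * lucS (k + 3) (k + 1) - s * lucS (k + 2) k := by
  unfold lucS
  rw [Finset.sum_range_succ' _ (k + 2), Finset.sum_range_succ' _ (k + 2), mul_add,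
    Finset.mul_sum, Finset.mul_sum, add_sub_right_comm, ← Finset.sum_sub_distrib]
  congr 1
  · apply Finset.sum_congr rfl
    intro a _
    rw [lucC_rec k a hk, C_add]
    have e : k + 2 - 2 * (a + 1) = k - 2 * a := by omega
    rw [e]
    by_cases h : 2 * a + 1 ≤ k
    · have e2 : k - 2 * a = (k + 1 - 2 * (a + 1)) + 1 := by omega
      rw [e2]; ring
    · rw [lucC_zero (k + 1) (a + 1) (by omega) (by omega), C_0]; ring
  · have c1 : ∀ m : ℕ, lucC (m + 1) 0 = 1 := by
      intro m
      have : (m : ℚ) + 1 ≠ 0 := by positivity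
      simp [lucC, this]
    rw [c1 (k + 1), c1 k]
    simp only [mul_zero, Nat.sub_zero, pow_zero]
    ring

lemma lucS_lucP (k : ℕ) : lucS ((k + 1) / 2 + 1) (k + 1) = lucP s t (k + 1) ∧
    lucS ((k + 2) / 2 + 1) (k + 2) = lucP s t (k + 2) := by
  induction k with
  | zero =>
    constructor
    · simp [lucS, lucP, lucC]
    · have : (2 : ℚ) - 1 = 1 := by norm_num
      simp [lucS, lucP, lucC, Finset.sum_range_succ, this]
      have c2 : (C (2 : ℚ) : MvPolynomial (Fin 2) ℚ) = 2 := map_ofNat C 2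
      rw [c2]
      ring
  | succ k ih =>
    refine ⟨ih.2, ?_⟩
    have := lucS_rec (k + 1) (by omega)
    rw [lucS_eq _ _ (by omega) (by omega), lucS_eq (k + 1 + 3) (k + 1 + 1) (by omega) (by omega),
      lucS_eq (k + 1 + 2) (k + 1) (by omega) (by omega), ih.1, ih.2] at this
    rw [this]
    simp only [lucP]

lemma f_eq (k : ℕ) : f (k + 1) = C ((-1 : ℚ) ^ k / (k + 1)) * lucP s t (k + 1) := by
  rw [← (lucS_lucP k).1]
  unfold f lucS
  rw [Finset.mul_sum]
  apply Finset.sum_congr rfl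
  intro a ha
  rw [Finset.mem_range] at ha
  have e : (-s) ^ a = C ((-1 : ℚ) ^ a) * s ^ a := by
    rw [neg_pow]; simp
  rw [e]
  have h : (-1 : ℚ) ^ (k + 1 - a - 1) / ((k + 1 : ℕ) - a : ℚ) * ((k + 1 - a).choose a : ℚ) =
      (-1 : ℚ) ^ k / (k + 1) * lucC (k + 1) a * (-1) ^ a := by
    obtain ⟨n, rfl⟩ : ∃ n, k = n + a := ⟨k - a, by omega⟩
    have e1 : n + a + 1 - a - 1 = n := by omega
    have p : (n : ℚ) + a + 1 ≠ 0 := by positivity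
    have q : (-1 : ℚ) ^ a * (-1) ^ a = 1 := by rw [← mul_pow]; simp
    unfold lucC
    rw [e1, pow_add]
    push_cast
    have d : (n : ℚ) + a + 1 - a = n + 1 := by ring
    rw [d]
    have p1 : (n : ℚ) + 1 ≠ 0 := by positivity
    field_simp
    linear_combination (-((n + a + 1 - a).choose a : ℚ)) * q
  rw [h, C_mul, C_mul]
  ring

lemma G_eq (k : ℕ) : G (k + 1) = C ((-1 : ℚ) ^ k / (k + 1)) *
    lucP (C (1/4 : ℚ) * ((X 0) ^ 2 + (X 1) ^ 2)) (X 0) (k + 1) := by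
  unfold G
  rw [f_eq, map_mul]
  have := (lucP_map (RingHomClass.toRingHom (aeval ![C (1/4 : ℚ) * ((X 0) ^ 2 + (X 1) ^ 2), X 0] :
    MvPolynomial (Fin 2) ℚ →ₐ[ℚ] MvPolynomial (Fin 2) ℚ)) s t (k + 1)).1
  simp only [RingHom.coe_coe] at this
  rw [this]
  simp [s, t, algebraMap_eq]

theorem stmt3 (k : ℕ) (hk : 1 ≤ k) :
    iota (X 0 * G (2 * k - 1)) =
      C ((-1 : ℚ) ^ (k + 1)) *
        (C ((4 * (k : ℚ)) / (2 * (k : ℚ) - 1)) * G (2 * k) + X 0 * G (2 * k - 1)) := by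
  obtain ⟨j, rfl⟩ : ∃ j, k = j + 1 := ⟨k - 1, by omega⟩
  have e1 : 2 * (j + 1) - 1 = 2 * j + 1 := by omega
  have e2 : 2 * (j + 1) = 2 * j + 1 + 1 := by omega
  rw [e1, e2, G_eq, G_eq]
  have h4 : (C (1/4 : ℚ) : MvPolynomial (Fin 2) ℚ) * 4 = 1 := by
    have : (4 : MvPolynomial (Fin 2) ℚ) = C 4 := (map_ofNat C 4).symm
    rw [this, ← C_mul]; norm_num
  have hi := (lucP_map (RingHomClass.toRingHom iota)
    (C (1/4 : ℚ) * ((X 0) ^ 2 + (X 1) ^ 2)) (X 0) (2 * j + 1)).1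
  simp only [RingHom.coe_coe] at hi
  have i0 : iota (X 0) = -(X 1) := by simp [iota]
  have i1 : iota (X 1) = X 0 := by simp [iota]
  have iC : ∀ q : ℚ, iota (C q) = C q := by intro q; simp [iota, algebraMap_eq]
  have is : iota (C (1/4 : ℚ) * ((X 0) ^ 2 + (X 1) ^ 2)) =
      C (1/4 : ℚ) * ((X 0) ^ 2 + (X 1) ^ 2) := by
    rw [map_mul, map_add, map_pow, map_pow, i0, i1, iC]; ring
  rw [is, i0] at hi
  have key := (lucP_key (C (1/4 : ℚ) * ((X 0) ^ 2 + (X 1) ^ 2)) (X 0 : MvPolynomial (Fin 2) ℚ)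
    (X 1) (by linear_combination (-((X 0) ^ 2 + (X 1) ^ 2)) * h4) j).2
  rw [map_mul, map_mul, i0, iC, hi]
  have c1 : (-1 : ℚ) ^ (2 * j) / ((2 * j : ℕ) + 1) = 1 / (2 * j + 1) := by
    rw [pow_mul]; simp
  have p1 : (2 * (j : ℚ) + 1) ≠ 0 := by positivity
  have p2 : ((j : ℚ) + 1) ≠ 0 := by positivity
  have c2 : 4 * ((j + 1 : ℕ) : ℚ) / (2 * ((j + 1 : ℕ) : ℚ) - 1) *
      ((-1 : ℚ) ^ (2 * j + 1) / ((2 * j + 1 : ℕ) + 1)) = (1 / (2 * j + 1)) * (-2) := by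
    rw [pow_succ, pow_mul]
    push_cast
    have d : 2 * ((j : ℚ) + 1) - 1 = 2 * j + 1 := by ring
    have d' : 2 * (j : ℚ) + 1 + 1 = 2 * (j + 1) := by ring
    rw [d, d']
    field_simp
    norm_num
  rw [← mul_assoc (C _) (C _), ← C_mul, c2, c1, C_mul]
  have c3 : (C ((-1 : ℚ) ^ (j + 1 + 1)) : MvPolynomial (Fin 2) ℚ) = (-1) ^ j := by
    rw [pow_succ, pow_succ]; simp
  have c4 : (C (-2 : ℚ) : MvPolynomial (Fin 2) ℚ) = -2 := by
    rw [C_neg]; exact congrArg Neg.neg (map_ofNat C 2)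
  rw [c3, c4]
  linear_combination C (1 / (2 * (j : ℚ) + 1)) * key
end

section
/- For every integer r with 0 ≤ 2r ≤ n, the element π_{2r,r} := (−1)^r·(2n−4r+1)!!·Σ_{i=0}^{r} (−1)^i·((2r−2i−1)!!/(2n−2r−2i+1)!!)·e_{2r,i} of M is primitive, i.e. Λ π_{2r,r} = 0. -/
/-- Valid basis indices: pairs `(k,p)` of integers with `0 ≤ p` and `2p ≤ k`. -/
def Idx : Type := { x : ℤ × ℤ // 0 ≤ x.2 ∧ 2 * x.2 ≤ x.1 }

/-- The free real vector space on the basis `{e_{k,p} : 0 ≤ 2p ≤ k}`. -/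
abbrev M : Type := Idx →₀ ℝ

/-- The basis vector `e_{k,p}`, with the convention that it is `0` for invalid indices. -/
noncomputable def e (k p : ℤ) : M :=
  if h : 0 ≤ p ∧ 2 * p ≤ k then Finsupp.single ⟨(k, p), h⟩ 1 else 0

/-- `L e_{k,p} = (k - 2p + 1) e_{k+1,p}`. -/
noncomputable def opL : M →ₗ[ℝ] M :=
  Finsupp.lsum ℝ fun v => LinearMap.toSpanSingleton ℝ M
    (((v.1.1 - 2 * v.1.2 + 1 : ℤ) : ℝ) • e (v.1.1 + 1) v.1.2)

/-- `Λ e_{k,p} = (2n - 2p - k + 1) e_{k-1,p} + (k - 2p + 1) e_{k-1,p-1}`. -/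
noncomputable def opLam (n : ℕ) : M →ₗ[ℝ] M :=
  Finsupp.lsum ℝ fun v => LinearMap.toSpanSingleton ℝ M
    ((((2 * (n : ℤ) - 2 * v.1.2 - v.1.1 + 1 : ℤ) : ℝ)) • e (v.1.1 - 1) v.1.2 +
      (((v.1.1 - 2 * v.1.2 + 1 : ℤ) : ℝ)) • e (v.1.1 - 1) (v.1.2 - 1))

/-- `H e_{k,p} = (2k - 2n) e_{k,p}`. -/
noncomputable def opH (n : ℕ) : M →ₗ[ℝ] M :=
  Finsupp.lsum ℝ fun v => LinearMap.toSpanSingleton ℝ M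
    (((2 * v.1.1 - 2 * (n : ℤ) : ℤ) : ℝ) • e v.1.1 v.1.2)

/-- The primitive element
`π_{2r,r} = (-1)^r (2n-4r+1)!! ∑_{i=0}^r (-1)^i ((2r-2i-1)!!/(2n-2r-2i+1)!!) e_{2r,i}`.
(Note `(2r-2i-1)` is truncated natural subtraction, so for `i = r` the numerator is
`0‼ = 1`, matching the convention `(-1)!! = 1`.) -/
noncomputable def piBase (n r : ℕ) : M :=
  ((-1 : ℝ) ^ r * (Nat.doubleFactorial (2 * n - 4 * r + 1) : ℝ)) •
    ∑ i ∈ Finset.range (r + 1),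
      ((-1 : ℝ) ^ i * (Nat.doubleFactorial (2 * r - 2 * i - 1) : ℝ) /
          (Nat.doubleFactorial (2 * n - 2 * r - 2 * i + 1) : ℝ)) •
        e (2 * r : ℤ) (i : ℤ)

theorem opLam_e (n : ℕ) (k p : ℤ) (h : 0 ≤ p ∧ 2 * p ≤ k) :
    opLam n (e k p) = ((2 * (n : ℝ) - 2 * p - k + 1)) • e (k - 1) p +
      ((k : ℝ) - 2 * p + 1) • e (k - 1) (p - 1) := by
  rw [e, dif_pos h, opLam]
  erw [Finsupp.lsum_single]
  rw [LinearMap.toSpanSingleton_apply, one_smul]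
  push_cast
  rfl

/-- coefficient of `e_{2r,i}` -/
noncomputable def cf (n r i : ℕ) : ℝ :=
  (-1 : ℝ) ^ i * (Nat.doubleFactorial (2 * r - 2 * i - 1) : ℝ) /
          (Nat.doubleFactorial (2 * n - 2 * r - 2 * i + 1) : ℝ)

theorem cf_rec (n r i : ℕ) (hr : 2 * r ≤ n) (hi : i < r) :
    cf n r i * (2 * (n : ℝ) - 2 * i - 2 * r + 1) +
      cf n r (i + 1) * (2 * (r : ℝ) - 2 * i - 1) = 0 := by
  obtain ⟨s, rfl⟩ : ∃ s, r = i + 1 + s := ⟨r - (i + 1), by omega⟩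
  obtain ⟨t, rfl⟩ := Nat.exists_eq_add_of_le hr
  have h1 : 2 * (i + 1 + s) - 2 * i - 1 = 2 * s + 1 := by omega
  have h2 : 2 * (i + 1 + s) - 2 * (i + 1) - 1 = 2 * s - 1 := by omega
  have h3 : 2 * (2 * (i + 1 + s) + t) - 2 * (i + 1 + s) - 2 * i + 1
      = (2 * (t + s) + 1) + 2 := by omega
  have h4 : 2 * (2 * (i + 1 + s) + t) - 2 * (i + 1 + s) - 2 * (i + 1) + 1
      = 2 * (t + s) + 1 := by omega
  have h5 : (2 * s + 1).doubleFactorial = (2 * s + 1) * (2 * s - 1).doubleFactorial := by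
    cases s with
    | zero => rfl
    | succ s => exact Nat.doubleFactorial_add_two (2 * s + 1)
  unfold cf
  rw [h1, h2, h3, h4, h5, Nat.doubleFactorial_add_two]
  have h6 : ((2 * (t + s) + 1).doubleFactorial : ℝ) ≠ 0 := by
    exact_mod_cast (Nat.doubleFactorial_pos _).ne'
  have h7 : (2 * ((t : ℝ) + s) + 1 + 2) ≠ 0 := by positivity
  push_cast
  field_simp
  ring

theorem partial_sum (n r : ℕ) (hr : 2 * r ≤ n) (m : ℕ) (hm : m ≤ r) :
    ∑ i ∈ Finset.range m, cf n r i • opLam n (e (2 * r : ℤ) (i : ℤ)) =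
      -((cf n r m * (2 * (r : ℝ) - 2 * m + 1)) • e (2 * r - 1) ((m : ℤ) - 1)) := by
  induction m with
  | zero => simp [e]
  | succ m ih =>
    rw [Finset.sum_range_succ, ih (by omega), opLam_e _ _ _ (by omega)]
    have h := cf_rec n r m hr (by omega)
    have e1 : ((m + 1 : ℕ) : ℤ) - 1 = m := by push_cast; ring
    rw [e1]
    push_cast
    have h' : cf n r (m + 1) * (2 * (r : ℝ) - 2 * (m + 1) + 1) =
        - (cf n r m * (2 * (n : ℝ) - 2 * m - 2 * r + 1)) := by linarith
    rw [h']
    module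

theorem stmt12 (n r : ℕ) (hr : 2 * r ≤ n) : opLam n (piBase n r) = 0 := by
  have key : ∑ i ∈ Finset.range (r + 1), cf n r i • opLam n (e (2 * r : ℤ) (i : ℤ)) = 0 := by
    rw [Finset.sum_range_succ, partial_sum n r hr r le_rfl, opLam_e _ _ _ (by omega)]
    have h0 : e (2 * (r : ℤ) - 1) (r : ℤ) = 0 := by
      rw [e, dif_neg (by omega)]
    rw [h0]
    push_cast
    module
  rw [piBase, map_smul, map_sum]
  simp only [map_smul]
  unfold cf at key
  rw [key, smul_zero]
end

section
/- For all integers r, k with 0 ≤ 2r ≤ n and k ≥ 2r one has π_{k,r} = (−1)^r·(2n−4r+1)!!·Σ_{i=0}^{r} (−1)^i·((k−2i)!/(2r−2i)!)·((2r−2i−1)!!/(2n−2r−2i+1)!!)·e_{k,i} in M. -/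
/-- `π_{k,r} := L^(k-2r) π_{2r,r}`. -/
noncomputable def piElt (n k r : ℕ) : M := (opL ^ (k - 2 * r)) (piBase n r)

theorem opL_e (k p : ℤ) (hp : 0 ≤ p) (hk : 2 * p ≤ k) :
    opL (e k p) = ((k - 2 * p + 1 : ℤ) : ℝ) • e (k + 1) p := by
  have h : e k p = Finsupp.single (⟨(k, p), hp, hk⟩ : Idx) 1 := by
    unfold e
    rw [dif_pos ⟨hp, hk⟩]
    rfl
  rw [h]
  unfold opL
  erw [Finsupp.lsum_single]
  rw [LinearMap.toSpanSingleton_apply, one_smul]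

theorem stmt13 (n k r : ℕ) (hrn : 2 * r ≤ n) (hrk : 2 * r ≤ k) :
    piElt n k r =
      ((-1 : ℝ) ^ r * (Nat.doubleFactorial (2 * n - 4 * r + 1) : ℝ)) •
        ∑ i ∈ Finset.range (r + 1),
          ((-1 : ℝ) ^ i * ((k - 2 * i).factorial : ℝ) / ((2 * r - 2 * i).factorial : ℝ) *
              (Nat.doubleFactorial (2 * r - 2 * i - 1) : ℝ) /
              (Nat.doubleFactorial (2 * n - 2 * r - 2 * i + 1) : ℝ)) •
            e (k : ℤ) (i : ℤ) := by
  obtain ⟨m, rfl⟩ := Nat.exists_eq_add_of_le hrk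
  unfold piElt
  rw [Nat.add_sub_cancel_left]
  clear hrk
  induction m with
  | zero =>
    rw [pow_zero, Module.End.one_apply]
    unfold piBase
    congr 1
    apply Finset.sum_congr rfl
    intro i _
    have h : ((2 * r - 2 * i).factorial : ℝ) ≠ 0 := by positivity
    have h0 : 2 * r + 0 = 2 * r := rfl
    rw [h0, mul_div_assoc _ _ ((2 * r - 2 * i).factorial : ℝ), div_self h, mul_one]
    norm_num
  | succ m ih =>
    rw [pow_succ', Module.End.mul_apply, ih, map_smul, map_sum]
    congr 1
    apply Finset.sum_congr rfl
    intro i hi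
    have hir : i ≤ r := by
      have := Finset.mem_range.mp hi
      omega
    rw [map_smul, opL_e _ _ (by omega) (by push_cast; omega), smul_smul]
    have h1 : 2 * r + (m + 1) - 2 * i = (2 * r + m - 2 * i) + 1 := by omega
    have h2 : (((2 * r + m : ℕ) : ℤ) - 2 * (i : ℤ) + 1) = ((2 * r + m - 2 * i + 1 : ℕ) : ℤ) := by
      omega
    rw [h1, h2, Nat.factorial_succ]
    have h3 : (((2 * r + m : ℕ) : ℤ) + 1) = ((2 * r + (m + 1) : ℕ) : ℤ) := by omega
    rw [h3, Int.cast_natCast, Nat.cast_mul]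
    congr 1
    ring
end
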